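/- Let R be a ring satisfying: (a) there exists a finite set {e_i}_{i∈I} of orthogonal idempotents of R such that each e_iR is a local injective right R-module of composition length two and J(R_R) = ⊕_{i∈I} J(e_iR); (b) R/J(R) is a right SV-ring and the Loewy length of R_R is at most 2; (c) R/SI(R_R) is a right artinian ring. If S is a simple submodule of a right R-module N with S ⊆ J(N) and S ∩ N' = 0 for some submodule N' of N, then there exist submodules L and N'' of N such that L is a local module of composition length two, S ⊆ L, N' ⊆ N'', and N = N'' ⊕ L. -/

import Mathlib

universe u v w

section Defs

variable (A : Type u) [Ring A]

/-- The radical of a module: the intersection of all maximal submodules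
(`⊤` if there are none). -/
def modRad (M : Type w) [AddCommGroup M] [Module A M] : Submodule A M :=
  sInf {P : Submodule A M | IsCoatom P}

/-- The socle of a module: the sum of all simple submodules. -/
def modSocle (M : Type w) [AddCommGroup M] [Module A M] : Submodule A M :=
  sSup {S : Submodule A M | IsAtom S}

/-- A submodule `N` of `M` is small if `N ⊔ K = ⊤` implies `K = ⊤`. -/
def IsSmallSubmodule {M : Type w} [AddCommGroup M] [Module A M] (N : Submodule A M) : Prop :=
  ∀ K : Submodule A M, N ⊔ K = ⊤ → K = ⊤

/-- `N` is a direct summand of `M`. -/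
def IsDirectSummand {M : Type w} [AddCommGroup M] [Module A M] (N : Submodule A M) : Prop :=
  ∃ N' : Submodule A M, IsCompl N N'

/-- `N` is an essential submodule of `M`. -/
def IsEssentialSubmodule {M : Type w} [AddCommGroup M] [Module A M] (N : Submodule A M) : Prop :=
  ∀ K : Submodule A M, K ≠ ⊥ → N ⊓ K ≠ ⊥

/-- An `I₀`-module: every non-small submodule contains a nonzero direct summand. -/
def IsI0Module (M : Type w) [AddCommGroup M] [Module A M] : Prop :=
  ∀ N : Submodule A M, ¬ IsSmallSubmodule A N →
    ∃ D : Submodule A M, D ≠ ⊥ ∧ D ≤ N ∧ IsDirectSummand A D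

/-- A `V`-module: every proper submodule is an intersection of maximal submodules. -/
def IsVModule (M : Type w) [AddCommGroup M] [Module A M] : Prop :=
  ∀ N : Submodule A M, N ≠ ⊤ →
    ∃ S : Set (Submodule A M), (∀ P ∈ S, IsCoatom P) ∧ N = sInf S

/-- A local module: it has a proper submodule containing every proper submodule. -/
def IsLocalModule (M : Type w) [AddCommGroup M] [Module A M] : Prop :=
  ∃ P : Submodule A M, P ≠ ⊤ ∧ ∀ K : Submodule A M, K ≠ ⊤ → K ≤ P

/-- A module of composition length two: it has a submodule which is simultaneously an atom
and a coatom of its submodule lattice, i.e. a composition series `0 ⋖ S ⋖ M`. -/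
def HasLengthTwo (M : Type w) [AddCommGroup M] [Module A M] : Prop :=
  ∃ S : Submodule A M, IsAtom S ∧ IsCoatom S

/-- A uniform module: nonzero, and any two nonzero submodules intersect nontrivially. -/
def IsUniformModule (M : Type w) [AddCommGroup M] [Module A M] : Prop :=
  Nontrivial M ∧ ∀ K L : Submodule A M, K ≠ ⊥ → L ≠ ⊥ → K ⊓ L ≠ ⊥

/-- A uniserial module: submodules are linearly ordered by inclusion. -/
def IsUniserialModule (M : Type w) [AddCommGroup M] [Module A M] : Prop :=
  ∀ K L : Submodule A M, K ≤ L ∨ L ≤ K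

/-- A semiartinian module: every nonzero quotient has a nonzero socle. -/
def IsSemiartinianModule (M : Type w) [AddCommGroup M] [Module A M] : Prop :=
  ∀ N : Submodule A M, N ≠ ⊤ → modSocle A (M ⧸ N) ≠ ⊥

/-- `U` is `M`-injective: homomorphisms from submodules of `M` to `U` extend to `M`. -/
def RelInjective (M : Type v) (U : Type w) [AddCommGroup M] [Module A M]
    [AddCommGroup U] [Module A U] : Prop :=
  ∀ (K : Submodule A M) (f : K →ₗ[A] U), ∃ g : M →ₗ[A] U, ∀ x : K, g (x : M) = f x

/-- `P` is `M`-projective: homomorphisms from `P` to quotients of `M` lift to `M`. -/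
def RelProjective (M : Type v) (P : Type w) [AddCommGroup M] [Module A M]
    [AddCommGroup P] [Module A P] : Prop :=
  ∀ (K : Submodule A M) (f : P →ₗ[A] M ⧸ K), ∃ h : P →ₗ[A] M, ∀ x : P, K.mkQ (h x) = f x

/-- `M` is almost `N`-projective. -/
def AlmostNProjective (M : Type v) (N : Type w) [AddCommGroup M] [Module A M]
    [AddCommGroup N] [Module A N] : Prop :=
  ∀ (K : Submodule A N) (f : M →ₗ[A] N ⧸ K),
    (∃ h : M →ₗ[A] N, ∀ x : M, K.mkQ (h x) = f x) ∨
    (∃ N' : Submodule A N, N' ≠ ⊥ ∧ IsDirectSummand A N' ∧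
      ∃ h' : N' →ₗ[A] M, ∀ x : N', K.mkQ (x : N) = f (h' x))

/-- `M` is almost projective: almost `N`-projective for every module `N`. -/
def IsAlmostProjective (M : Type w) [AddCommGroup M] [Module A M] : Prop :=
  ∀ (N : Type v) [AddCommGroup N] [Module A N], AlmostNProjective A M N

/-- `M` is almost `N`-injective. -/
def AlmostNInjective (M : Type v) (N : Type w) [AddCommGroup M] [Module A M]
    [AddCommGroup N] [Module A N] : Prop :=
  ∀ (N₀ : Submodule A N) (f : N₀ →ₗ[A] M),
    (∃ g : N →ₗ[A] M, ∀ x : N₀, g (x : N) = f x) ∨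
    (∃ π : Module.End A N, IsIdempotentElem π ∧ π ≠ 0 ∧
      ∃ h : M →ₗ[A] LinearMap.range π, ∀ x : N₀, (↑(h (f x)) : N) = π (x : N))

/-- `M` is almost injective: almost `N`-injective for every module `N`. -/
def IsAlmostInjective (M : Type w) [AddCommGroup M] [Module A M] : Prop :=
  ∀ (N : Type v) [AddCommGroup N] [Module A N], AlmostNInjective A M N

/-- `N` belongs to `σ(M)`: `N` is isomorphic to a submodule of a quotient of a direct sum
of copies of `M`. -/
def InSigma (M : Type v) [AddCommGroup M] [Module A M]
    (N : Type w) [AddCommGroup N] [Module A N] : Prop :=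
  ∃ (ι : Type v) (K : Submodule A (ι →₀ M)) (P : Submodule A ((ι →₀ M) ⧸ K)),
    Nonempty (N ≃ₗ[A] P)

/-- `P` is a projective object of the category `σ(M)`. -/
def ProjInSigma (M : Type v) [AddCommGroup M] [Module A M]
    (P : Type w) [AddCommGroup P] [Module A P] : Prop :=
  InSigma A M P ∧
  ∀ (X Y : Type v) [AddCommGroup X] [Module A X] [AddCommGroup Y] [Module A Y],
    InSigma A M X → InSigma A M Y →
    ∀ (g : X →ₗ[A] Y), Function.Surjective g →
    ∀ f : P →ₗ[A] Y, ∃ h : P →ₗ[A] X, ∀ x : P, g (h x) = f x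

/-- `M` is an almost `V`-module: every simple module is almost `N`-injective
for every `N ∈ σ(M)`. -/
def IsAlmostVModule (M : Type v) [AddCommGroup M] [Module A M] : Prop :=
  ∀ (S : Type v) [AddCommGroup S] [Module A S], IsSimpleModule A S →
    ∀ (N : Type v) [AddCommGroup N] [Module A N], InSigma A M N → AlmostNInjective A S N

end Defs

/-- `SI(R_R)`: the sum of all simple injective submodules of the right regular module. -/
def SIdeal (R : Type u) [Ring R] : Submodule Rᵐᵒᵖ R :=
  sSup {T : Submodule Rᵐᵒᵖ R | IsAtom T ∧ Module.Injective Rᵐᵒᵖ ↥T}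

/-- Condition (a): there is a finite set of orthogonal idempotents `eᵢ` such that each
`eᵢR` is a local injective right module of length two and `J(R_R) = ⊕ J(eᵢR)`. -/
def HypA (R : Type u) [Ring R] : Prop :=
  ∃ (n : ℕ) (e : Fin n → R),
    (∀ i, IsIdempotentElem (e i)) ∧
    (∀ i j, i ≠ j → e i * e j = 0) ∧
    (∀ i, IsLocalModule Rᵐᵒᵖ ↥(Submodule.span Rᵐᵒᵖ ({e i} : Set R)) ∧
      Module.Injective Rᵐᵒᵖ ↥(Submodule.span Rᵐᵒᵖ ({e i} : Set R)) ∧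
      HasLengthTwo Rᵐᵒᵖ ↥(Submodule.span Rᵐᵒᵖ ({e i} : Set R))) ∧
    iSupIndep (fun i => Submodule.span Rᵐᵒᵖ ({e i} : Set R)) ∧
    modRad Rᵐᵒᵖ R =
      ⨆ i, (modRad Rᵐᵒᵖ ↥(Submodule.span Rᵐᵒᵖ ({e i} : Set R))).map
        (Submodule.span Rᵐᵒᵖ ({e i} : Set R)).subtype

/-- Condition (b): `R/J(R)` is a right `SV`-ring and the Loewy length of `R_R` is at
most `2` (i.e. `R/Soc(R_R)` is semisimple). -/
def HypB (R : Type u) [Ring R] : Prop :=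
  (∃ c : RingCon R, (∀ x : R, c x 0 ↔ x ∈ modRad Rᵐᵒᵖ R) ∧
      IsSemiartinianModule (RingCon.Quotient c)ᵐᵒᵖ (RingCon.Quotient c) ∧
      IsVModule (RingCon.Quotient c)ᵐᵒᵖ (RingCon.Quotient c)) ∧
  IsSemisimpleModule Rᵐᵒᵖ (R ⧸ modSocle Rᵐᵒᵖ R)

/-- Condition (c): `R/SI(R_R)` is a right artinian ring. -/
def HypC (R : Type u) [Ring R] : Prop :=
  ∃ c : RingCon R, (∀ x : R, c x 0 ↔ x ∈ SIdeal R) ∧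
    IsArtinian (RingCon.Quotient c)ᵐᵒᵖ (RingCon.Quotient c)

/-!
Write `J` for the Jacobson radical.

Every module over a right `V`-ring is a `V`-module: it suffices to treat a module all of whose
cyclic submodules are `V`-modules, and a quotient of it maximal with respect to a given element
staying nonzero is simple. Applied to the `R/J(R)`-module `N/N J(R)`, this gives
`J(N) ⊆ N J(R)`, so `J(N)` is contained in a sum of images of the modules `J(eᵢR)` under
homomorphisms `eᵢR → N`.

A simple `S ⊆ J(N)` thus lifts to a finite direct sum of the semisimple modules `J(eᵢR)`. Some
component of the lift embeds `S` into `eᵢR`, and since all `eⱼR` are injective the whole lift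
extends along that embedding; so the inclusion `S → N` extends to `h : eᵢR → N`. As `eᵢR` is
uniform and `S ∩ N' = 0`, the composite `eᵢR → N → N/N'` is injective, hence splits.
-/

section VModules

variable {A B M M₂ Q : Type*} [Ring A] [Ring B] [AddCommGroup M] [Module A M]
  [AddCommGroup M₂] [Module B M₂] [AddCommGroup Q] [Module A Q]

theorem isVModule_iff_exists_isCoatom_notMem :
    IsVModule A M ↔ ∀ (K : Submodule A M) (x : M), x ∉ K →
      ∃ P : Submodule A M, IsCoatom P ∧ K ≤ P ∧ x ∉ P := by
  constructor
  · intro hM K x hx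
    obtain ⟨T, hT, rfl⟩ := hM K fun h => hx (h ▸ Submodule.mem_top)
    obtain ⟨P, hP, hxP⟩ : ∃ P ∈ T, x ∉ P := by
      simpa only [Submodule.mem_sInf, not_forall, exists_prop] using hx
    exact ⟨P, hT P hP, sInf_le hP, hxP⟩
  · intro h K _
    refine ⟨{P | IsCoatom P ∧ K ≤ P}, fun P hP => hP.1,
      le_antisymm (le_sInf fun P hP => hP.2) fun x hx => ?_⟩
    by_contra hxK
    obtain ⟨P, hP, hKP, hxP⟩ := h K x hxK
    exact hxP (Submodule.mem_sInf.1 hx P ⟨hP, hKP⟩)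

theorem IsVModule.of_ker_le {σ : A →+* B} [RingHomSurjective σ] (hM₂ : IsVModule B M₂)
    (f : M →ₛₗ[σ] M₂) (hf : Function.Surjective f) (g : M →ₗ[A] Q) (hg : Function.Surjective g)
    (hfg : LinearMap.ker f ≤ LinearMap.ker g) : IsVModule A Q := by
  rw [isVModule_iff_exists_isCoatom_notMem] at hM₂ ⊢
  intro K y hy
  obtain ⟨x, rfl⟩ := hg y
  have hfK : ((K.comap g).map f).comap f = K.comap g :=
    Submodule.comap_map_eq_self (hfg.trans (Submodule.comap_mono bot_le))
  have hx : f x ∉ (K.comap g).map f := by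
    rwa [← Submodule.mem_comap, hfK]
  obtain ⟨P, hP, hKP, hxP⟩ := hM₂ _ _ hx
  have hKP' : K.comap g ≤ P.comap f := hfK.ge.trans (Submodule.comap_mono hKP)
  have hgP : LinearMap.ker g ≤ P.comap f := (Submodule.comap_mono bot_le).trans hKP'
  refine ⟨(P.comap f).map g,
    Submodule.isCoatom_map_of_ker_le hg hgP ((Submodule.isCoatom_comap_iff hf).2 hP), ?_, ?_⟩
  · rw [← Submodule.map_comap_eq_of_surjective hg K]
    exact Submodule.map_mono hKP'
  · rwa [← Submodule.mem_comap, Submodule.comap_map_eq_self hgP]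

theorem IsVModule.of_surjective (hM : IsVModule A M) (f : M →ₗ[A] Q)
    (hf : Function.Surjective f) : IsVModule A Q :=
  hM.of_ker_le LinearMap.id Function.surjective_id f hf (by simp)

theorem exists_le_maximal_notMem {K : Submodule A M} {x : M} (hx : x ∉ K) :
    ∃ W : Submodule A M, K ≤ W ∧ Maximal (x ∉ ·) W := by
  refine zorn_le_nonempty₀ {W : Submodule A M | x ∉ W} (fun c hc hchain U hU => ?_) K hx
  refine ⟨sSup c, fun hmem => ?_, fun V hV => le_sSup hV⟩
  obtain ⟨V, hV, hxV⟩ := (Submodule.mem_sSup_of_directed ⟨U, hU⟩ hchain.directedOn).1 hmem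
  exact hc hV hxV

theorem mkQ_mem_of_maximal_notMem {W : Submodule A M} {x : M} (hW : Maximal (x ∉ ·) W)
    (K : Submodule A (M ⧸ W)) (hK : K ≠ ⊥) : W.mkQ x ∈ K := by
  by_contra hx
  have hKW : K.comap W.mkQ ≤ W := hW.le_of_ge hx (Submodule.le_comap_mkQ W K)
  apply hK
  rw [← Submodule.map_comap_eq_of_surjective W.mkQ_surjective K, eq_bot_iff,
    ← Submodule.mkQ_map_self W]
  exact Submodule.map_mono hKW

theorem IsVModule.isAtom_of_forall_mem {U : Submodule A M} (hU : IsVModule A U) {x : M}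
    (hx : x ≠ 0) (hmem : ∀ K : Submodule A M, K ≠ ⊥ → x ∈ K) (hU₀ : U ≠ ⊥) : IsAtom U := by
  have hx' : (⟨x, hmem U hU₀⟩ : U) ∉ (⊥ : Submodule A U) := by
    simpa [Subtype.ext_iff] using hx
  obtain ⟨P, hP, -, hxP⟩ := isVModule_iff_exists_isCoatom_notMem.1 hU ⊥ _ hx'
  obtain rfl : P = ⊥ := by
    by_contra hP₀
    obtain ⟨y, hy, hyx⟩ := hmem (P.map U.subtype)
      fun h => hP₀ (Submodule.map_injective_of_injective U.injective_subtype
        (h.trans (Submodule.map_bot _).symm))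
    exact hxP ((Subtype.ext hyx : y = ⟨x, _⟩) ▸ hy)
  exact isSimpleModule_iff_isAtom.1
    { toIsSimpleOrder := isSimpleOrder_iff_isCoatom_bot.2 hP }

theorem isSimpleModule_of_span_singleton_isVModule
    (hM : ∀ y : M, IsVModule A (Submodule.span A {y})) {x : M} (hx : x ≠ 0)
    (hmem : ∀ K : Submodule A M, K ≠ ⊥ → x ∈ K) : IsSimpleModule A M := by
  have hatom : ∀ y : M, y ≠ 0 → IsAtom (Submodule.span A {y}) := fun y hy =>
    (hM y).isAtom_of_forall_mem hx hmem (by simpa using hy)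
  have htop : Submodule.span A {x} = ⊤ := by
    refine (Submodule.eq_top_iff'.2 fun y => ?_)
    rcases eq_or_ne y 0 with rfl | hy
    · exact zero_mem _
    have hle : Submodule.span A {x} ≤ Submodule.span A {y} :=
      (Submodule.span_singleton_le_iff_mem _ _).2 (hmem _ (hatom y hy).1)
    exact ((hatom y hy).le_iff_eq (hatom x hx).1).1 hle ▸ Submodule.mem_span_singleton_self y
  exact { toIsSimpleOrder := isSimpleOrder_iff_isAtom_top.2 (htop ▸ hatom x hx) }

theorem isVModule_of_span_singleton (hM : ∀ y : M, IsVModule A (Submodule.span A {y})) :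
    IsVModule A M := by
  refine isVModule_iff_exists_isCoatom_notMem.2 fun K x hx => ?_
  obtain ⟨W, hKW, hW⟩ := exists_le_maximal_notMem hx
  have hcyclic : ∀ z : M ⧸ W, IsVModule A (Submodule.span A {z}) := by
    intro z
    obtain ⟨y, rfl⟩ := W.mkQ_surjective z
    rw [← Set.image_singleton, ← Submodule.map_span]
    exact (hM y).of_surjective _ (W.mkQ.submoduleMap_surjective _)
  have hsimple : IsSimpleModule A (M ⧸ W) :=
    isSimpleModule_of_span_singleton_isVModule hcyclic
      (mt (Submodule.Quotient.mk_eq_zero W).1 hW.prop) (mkQ_mem_of_maximal_notMem hW)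
  exact ⟨W, isSimpleModule_iff_isCoatom.1 hsimple, hKW, hW.prop⟩

theorem isVModule_of_ker_smul_eq_zero (hB : IsVModule B B) {f : A →+* B}
    (hf : Function.Surjective f) (hM : ∀ a ∈ RingHom.ker f, ∀ y : M, a • y = 0) :
    IsVModule A M := by
  have : RingHomSurjective f := ⟨hf⟩
  refine isVModule_of_span_singleton fun y => ?_
  rw [← LinearMap.range_toSpanSingleton]
  refine hB.of_ker_le f.toSemilinearMap hf (LinearMap.toSpanSingleton A M y).rangeRestrict
    (LinearMap.surjective_rangeRestrict _) fun a ha => ?_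
  rw [LinearMap.ker_rangeRestrict]
  exact hM a ha y

theorem IsVModule.modRad_eq_bot (hM : IsVModule A M) : modRad A M = ⊥ := by
  refine eq_bot_iff.2 fun x hx => ?_
  by_contra hx₀
  obtain ⟨P, hP, -, hxP⟩ := isVModule_iff_exists_isCoatom_notMem.1 hM ⊥ x hx₀
  exact hxP (Submodule.mem_sInf.1 hx P hP)

theorem modRad_le_ker_smul_top (hB : IsVModule B B) {f : A →+* B}
    (hf : Function.Surjective f) : modRad A M ≤ RingHom.ker f • (⊤ : Submodule A M) := by
  refine Module.jacobson_le_of_eq_bot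
    (isVModule_of_ker_smul_eq_zero hB hf fun a ha z => ?_).modRad_eq_bot
  obtain ⟨y, rfl⟩ := Submodule.mkQ_surjective _ z
  rw [← map_smul]
  exact (Submodule.Quotient.mk_eq_zero _).2 (Submodule.smul_mem_smul ha Submodule.mem_top)

end VModules

section RightModules

variable {R N : Type*} [Ring R] [AddCommGroup N] [Module Rᵐᵒᵖ N]

/-- The homomorphism `r ↦ y r` of right modules from `R` to `N`, for `y` in `N`. Right modules
are left modules over `Rᵐᵒᵖ`, whence the identification of `R` with `Rᵐᵒᵖ`. -/
def rightOrbitMap (y : N) : R →ₗ[Rᵐᵒᵖ] N :=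
  LinearMap.toSpanSingleton Rᵐᵒᵖ N y ∘ₗ (MulOpposite.opLinearEquiv Rᵐᵒᵖ).toLinearMap

theorem modRad_le_iSup_map_rightOrbitMap {c : RingCon R}
    (hc : IsVModule c.Quotientᵐᵒᵖ c.Quotient) {I : Submodule Rᵐᵒᵖ R} (hI : ∀ x, c x 0 → x ∈ I) :
    modRad Rᵐᵒᵖ N ≤ ⨆ y : N, I.map (rightOrbitMap y) := by
  have hc' : IsVModule c.Quotientᵐᵒᵖ c.Quotientᵐᵒᵖ :=
    hc.of_surjective (MulOpposite.opLinearEquiv c.Quotientᵐᵒᵖ).toLinearMap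
      MulOpposite.op_surjective
  have hf : Function.Surjective (RingHom.op c.mk') := fun q => by
    obtain ⟨r, hr⟩ := c.mk'_surjective q.unop
    exact ⟨MulOpposite.op r, MulOpposite.unop_injective hr⟩
  refine (modRad_le_ker_smul_top hc' hf).trans (Submodule.smul_le.2 fun r hr y _ => ?_)
  have hr' : c r.unop 0 := (RingCon.eq c).1 (congrArg MulOpposite.unop hr)
  exact Submodule.mem_iSup_of_mem y ⟨r.unop, hI _ hr', rfl⟩

end RightModules

section LengthTwo

variable {A E F : Type*} [Ring A] [AddCommGroup E] [Module A E] [AddCommGroup F] [Module A F]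

theorem IsLocalModule.of_linearEquiv (hE : IsLocalModule A E) (e : E ≃ₗ[A] F) :
    IsLocalModule A F := by
  obtain ⟨P, hP, hmax⟩ := hE
  let o := Submodule.orderIsoMapComap e
  refine ⟨o P, (map_eq_top_iff o).not.2 hP, fun K hK => ?_⟩
  rw [← o.symm_apply_le]
  exact hmax _ ((map_eq_top_iff o.symm).not.2 hK)

theorem HasLengthTwo.of_linearEquiv (hE : HasLengthTwo A E) (e : E ≃ₗ[A] F) :
    HasLengthTwo A F := by
  obtain ⟨P, hatom, hcoatom⟩ := hE
  let o := Submodule.orderIsoMapComap e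
  exact ⟨o P, (o.isAtom_iff P).2 hatom, (o.isCoatom_iff P).2 hcoatom⟩

theorem HasLengthTwo.isSemisimpleModule_modRad (hE : HasLengthTwo A E) :
    IsSemisimpleModule A (modRad A E) := by
  obtain ⟨P, hatom, hcoatom⟩ := hE
  have : IsSimpleModule A P := isSimpleModule_iff_isAtom.2 hatom
  have hle : modRad A E ≤ P := sInf_le hcoatom
  exact IsSemisimpleModule.of_injective _ (Submodule.inclusion_injective hle)

theorem IsLocalModule.isUniformModule (hE : IsLocalModule A E) (h2 : HasLengthTwo A E) :
    IsUniformModule A E := by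
  obtain ⟨P, hP, hmax⟩ := hE
  obtain ⟨T, hatom, hcoatom⟩ := h2
  obtain rfl : T = P := (hcoatom.le_iff_eq hP).1 (hmax T hcoatom.1) |>.symm
  have hle : ∀ K : Submodule A E, K ≠ ⊥ → T ≤ K := by
    intro K hK
    rcases eq_or_ne K ⊤ with rfl | hK'
    · exact le_top
    · exact ((hatom.le_iff_eq hK).1 (hmax K hK')).ge
  have hnontrivial : Nontrivial (Submodule A E) := ⟨T, ⊤, hP⟩
  exact ⟨(Submodule.nontrivial_iff A).1 hnontrivial,
    fun K L hK hL => ne_bot_of_le_ne_bot hatom.1 (le_inf (hle K hK) (hle L hL))⟩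

end LengthTwo

section Splitting

variable {A N : Type*} [Ring A] [AddCommGroup N] [Module A N] {S N' : Submodule A N}

theorem exists_eq_sum_apply_of_le_iSup_range {κ : Type*} [Fintype κ] {D : κ → Type*}
    [∀ a, AddCommGroup (D a)] [∀ a, Module A (D a)] [∀ a, IsSemisimpleModule A (D a)]
    (f : ∀ a, D a →ₗ[A] N) (hS : S ≤ ⨆ a, LinearMap.range (f a)) :
    ∃ σ : ∀ a, S →ₗ[A] D a, ∀ x : S, (x : N) = ∑ a, f a (σ a x) := by
  classical
  let ψ : (∀ a, D a) →ₗ[A] N := LinearMap.lsum A D ℕ f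
  have hψ : S ≤ LinearMap.range ψ := hS.trans <| iSup_le fun a => by
    rintro _ ⟨d, rfl⟩
    exact ⟨Pi.single a d, LinearMap.lsum_piSingle A D ℕ f a d⟩
  obtain ⟨τ, hτ⟩ := IsSemisimpleModule.lifting_property ψ.rangeRestrict
    ψ.surjective_rangeRestrict (Submodule.inclusion hψ)
  refine ⟨fun a => LinearMap.proj a ∘ₗ τ, fun x => ?_⟩
  calc (x : N) = ψ (τ x) := congrArg Subtype.val (LinearMap.congr_fun hτ x).symm
    _ = ∑ a, f a (τ x a) := by
      simp only [ψ, LinearMap.lsum_apply, LinearMap.sum_apply, LinearMap.comp_apply,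
        LinearMap.proj_apply]

universe w' in
theorem exists_extension_of_le_iSup_map [Small.{w'} A] [IsSimpleModule A S] {κ : Type*}
    {E : κ → Type w'} [∀ a, AddCommGroup (E a)] [∀ a, Module A (E a)]
    [∀ a, Module.Injective A (E a)] (D : ∀ a, Submodule A (E a))
    [∀ a, IsSemisimpleModule A (D a)] (b : ∀ a, E a →ₗ[A] N) (hS : S ≤ ⨆ a, (D a).map (b a)) :
    ∃ (a : κ) (j : S →ₗ[A] E a) (h : E a →ₗ[A] N),
      Function.Injective j ∧ h ∘ₗ j = S.subtype := by
  have hcompact : IsCompactElement S :=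
    (Submodule.fg_iff_compact S).1 (Module.Finite.iff_fg.1 inferInstance)
  obtain ⟨s, hs⟩ :=
    CompleteLattice.IsCompactElement.exists_finset_of_le_iSup _ hcompact _ hS
  obtain ⟨σ, hσ⟩ : ∃ σ : ∀ a : s, S →ₗ[A] D a,
      ∀ x : S, (x : N) = ∑ a : s, (b a ∘ₗ (D a).subtype) (σ a x) := by
    refine exists_eq_sum_apply_of_le_iSup_range _ ?_
    simpa only [LinearMap.range_comp, Submodule.range_subtype, iSup_subtype] using hs
  obtain ⟨a, ha⟩ : ∃ a, σ a ≠ 0 := by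
    by_contra! hσ₀
    have : Nontrivial S := IsSimpleModule.nontrivial A S
    obtain ⟨x, hx⟩ := exists_ne (0 : S)
    exact hx (Subtype.ext (by simpa [hσ₀] using hσ x))
  let j : S →ₗ[A] E a := (D a).subtype ∘ₗ σ a
  have hj : Function.Injective j :=
    (D a).injective_subtype.comp (LinearMap.injective_of_ne_zero ha)
  choose g hg using fun c : s =>
    Module.Injective.extension_property A (E c) _ _ j hj ((D c).subtype ∘ₗ σ c)
  refine ⟨a, j, ∑ c : s, b c ∘ₗ g c, hj, LinearMap.ext fun x => ?_⟩
  have hgj : ∀ c : s, g c (j x) = σ c x := fun c => LinearMap.congr_fun (hg c) x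
  simp only [LinearMap.comp_apply, LinearMap.sum_apply, hgj, Submodule.subtype_apply, hσ x]

theorem ker_mkQ_comp_eq_bot_of_isUniformModule {E : Type*} [AddCommGroup E] [Module A E]
    (hE : IsUniformModule A E) (hS : S ≠ ⊥) {j : S →ₗ[A] E} (hj : Function.Injective j)
    {h : E →ₗ[A] N} (hh : h ∘ₗ j = S.subtype) (hSN' : S ⊓ N' = ⊥) :
    LinearMap.ker (N'.mkQ ∘ₗ h) = ⊥ := by
  rw [LinearMap.ker_comp, Submodule.ker_mkQ]
  by_contra hker
  have hrange : LinearMap.range j ≠ ⊥ := by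
    rw [Ne, LinearMap.range_eq_bot]
    rintro rfl
    refine hS (Submodule.eq_bot_iff _ |>.2 fun x hx => ?_)
    exact congrArg Subtype.val (hj rfl : (⟨x, hx⟩ : S) = 0)
  refine hE.2 _ _ hker hrange (eq_bot_iff.2 ?_)
  rintro _ ⟨hsN', s, rfl⟩
  have hhs : h (j s) = s := LinearMap.congr_fun hh s
  have hs : (s : N) ∈ S ⊓ N' := ⟨s.2, hhs ▸ hsN'⟩
  rw [hSN', Submodule.mem_bot, ZeroMemClass.coe_eq_zero] at hs
  rw [hs, map_zero, Submodule.mem_bot]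

universe w' in
theorem exists_isCompl_range_of_injective_mkQ_comp [Small.{w'} A] {E : Type w'}
    [AddCommGroup E] [Module A E] [Module.Injective A E] {h : E →ₗ[A] N}
    (hh : Function.Injective (N'.mkQ ∘ₗ h)) :
    ∃ N'' : Submodule A N, N' ≤ N'' ∧ IsCompl N'' (LinearMap.range h) := by
  obtain ⟨g, hg⟩ := Module.Injective.extension_property A E _ _ (N'.mkQ ∘ₗ h) hh LinearMap.id
  have hgh : ∀ x, g (N'.mkQ (h x)) = x := LinearMap.congr_fun hg
  let π : N →ₗ[A] LinearMap.range h := h.rangeRestrict ∘ₗ g ∘ₗ N'.mkQ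
  have hπ : ∀ y : LinearMap.range h, π y = y := by
    rintro ⟨_, x, rfl⟩
    exact Subtype.ext (congrArg h (hgh x))
  refine ⟨LinearMap.ker π, fun x hx => ?_, (LinearMap.isCompl_of_proj hπ).symm⟩
  have hx₀ : N'.mkQ x = 0 := (Submodule.Quotient.mk_eq_zero N').2 hx
  simp only [π, LinearMap.mem_ker, LinearMap.comp_apply, hx₀, map_zero]

universe w' in
theorem exists_isCompl_local_lengthTwo [Small.{w'} A] [IsSimpleModule A S] {κ : Type*}
    {E : κ → Type w'} [∀ a, AddCommGroup (E a)] [∀ a, Module A (E a)]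
    [∀ a, Module.Injective A (E a)] (hloc : ∀ a, IsLocalModule A (E a))
    (hlen : ∀ a, HasLengthTwo A (E a)) (b : ∀ a, E a →ₗ[A] N)
    (hS : S ≤ ⨆ a, (modRad A (E a)).map (b a)) (hSN' : S ⊓ N' = ⊥) :
    ∃ L N'' : Submodule A N,
      IsLocalModule A L ∧ HasLengthTwo A L ∧ S ≤ L ∧ N' ≤ N'' ∧ IsCompl N'' L := by
  have := fun a => (hlen a).isSemisimpleModule_modRad
  obtain ⟨a, j, h, hj, hh⟩ := exists_extension_of_le_iSup_map (fun a => modRad A (E a)) b hS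
  have hinj : Function.Injective (N'.mkQ ∘ₗ h) := LinearMap.ker_eq_bot.1 <|
    ker_mkQ_comp_eq_bot_of_isUniformModule ((hloc a).isUniformModule (hlen a))
      (isSimpleModule_iff_isAtom.1 ‹_›).1 hj hh hSN'
  obtain ⟨N'', hN'', hcompl⟩ := exists_isCompl_range_of_injective_mkQ_comp hinj
  let e : E a ≃ₗ[A] LinearMap.range h := LinearEquiv.ofInjective h (Function.Injective.of_comp hinj)
  refine ⟨LinearMap.range h, N'', (hloc a).of_linearEquiv e, (hlen a).of_linearEquiv e, ?_,
    hN'', hcompl⟩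
  calc S = LinearMap.range (h ∘ₗ j) := by rw [hh, Submodule.range_subtype]
    _ ≤ LinearMap.range h := LinearMap.range_comp_le_range j h

end Splitting

theorem lemma31_splitting_general {R : Type u} [Ring R] {ι : Type*} {E : ι → Submodule Rᵐᵒᵖ R}
    (hE : ∀ i, IsLocalModule Rᵐᵒᵖ (E i) ∧ Module.Injective Rᵐᵒᵖ (E i) ∧ HasLengthTwo Rᵐᵒᵖ (E i))
    {c : RingCon R} (hc : IsVModule c.Quotientᵐᵒᵖ c.Quotient)
    (hcE : ∀ x, c x 0 → x ∈ ⨆ i, (modRad Rᵐᵒᵖ (E i)).map (E i).subtype)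
    {N : Type v} [AddCommGroup N] [Module Rᵐᵒᵖ N] {S N' : Submodule Rᵐᵒᵖ N}
    (hS : IsSimpleModule Rᵐᵒᵖ S) (hSJ : S ≤ modRad Rᵐᵒᵖ N) (hSN' : S ⊓ N' = ⊥) :
    ∃ L N'' : Submodule Rᵐᵒᵖ N,
      IsLocalModule Rᵐᵒᵖ L ∧ HasLengthTwo Rᵐᵒᵖ L ∧ S ≤ L ∧ N' ≤ N'' ∧ IsCompl N'' L := by
  have := fun a : N × ι => (hE a.2).2.1
  refine exists_isCompl_local_lengthTwo (E := fun a : N × ι => E a.2) (fun a => (hE a.2).1)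
    (fun a => (hE a.2).2.2) (fun a => rightOrbitMap a.1 ∘ₗ (E a.2).subtype) ?_ hSN'
  calc S ≤ ⨆ y : N, (⨆ i, (modRad Rᵐᵒᵖ (E i)).map (E i).subtype).map (rightOrbitMap y) :=
        hSJ.trans (modRad_le_iSup_map_rightOrbitMap hc hcE)
    _ = ⨆ a : N × ι, (modRad Rᵐᵒᵖ (E a.2)).map (rightOrbitMap a.1 ∘ₗ (E a.2).subtype) := by
        simp only [Submodule.map_iSup, Submodule.map_comp, iSup_prod]

/-- Lemma 3.1 (4): under conditions (a), (b), (c), if `S` is a simple submodule of `N`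
with `S ⊆ J(N)` and `S ∩ N' = 0`, then `N = N'' ⊕ L` with `S ⊆ L`, `N' ⊆ N''` and `L`
local of length two. -/
theorem lemma31_splitting (R : Type u) [Ring R]
    (hA : HypA R) (hB : HypB R) (hC : HypC R)
    (N : Type v) [AddCommGroup N] [Module Rᵐᵒᵖ N]
    (S N' : Submodule Rᵐᵒᵖ N) (hS : IsSimpleModule Rᵐᵒᵖ ↥S)
    (hSJ : S ≤ modRad Rᵐᵒᵖ N) (hSN' : S ⊓ N' = ⊥) :
    ∃ L N'' : Submodule Rᵐᵒᵖ N,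
      IsLocalModule Rᵐᵒᵖ ↥L ∧ HasLengthTwo Rᵐᵒᵖ ↥L ∧ S ≤ L ∧ N' ≤ N'' ∧
        IsCompl N'' L := by
  obtain ⟨n, e, -, -, hE, -, hJ⟩ := hA
  obtain ⟨⟨c, hc, -, hV⟩, -⟩ := hB
  exact lemma31_splitting_general hE hV (fun x hx => hJ.le ((hc x).1 hx)) hS hSJ hSN'
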